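/- Let F and H be weighted marked graphs over R with V(F) ∩ V(H) = {a}, with a unlooped and unmarked in both, and suppose neither F nor H contains a marked neighbor of a. Let α(a(F)), β(a(F)), α(a_m(F)) be elements of R having the universal property of Theorem pjoin for F and a, and let α(a(H)), β(a(H)), α(a_m(H)) be elements of R having the same universal property for H and a. Then [F ∗ H] = α(a(F))·(α(a(H)) + β(a(H))) + β(a(F))·(α(a(H)) + β(a(H))·d) + (α(a(F))·d + β(a(F)))·α(a_m(H)) + α(a_m(F))·(α(a(H))·d + β(a(H))) + α(a_m(F))·α(a_m(H)). -/

import Mathlib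

/-!
The universal property of `F`, applied to `K = H`, turns `[F ∗ H]` into `[H'] + [H'_m]`, where `H'`
is `H` with weights `AF, BF` at `a`, and `H'_m` is `H` with `a` marked and weights `AmF, 0`.
Each summand is then evaluated by the universal property of `H`.

* Composing `H` with the graph `edgeGraph AF BF`, a single edge `ab` whose vertex `b` has weights
  `AF, BF`, replaces `a` by `b`, so it returns `H'` up to isomorphism (`bracket_comp_edgeGraph`).
* In `[H'_m]` only the sets `T` avoiding `a` contribute; the marked vertex `a` is then deleted, so
  `[H'_m] = AmF · [H − a]`, and `H − a` is the composition of `H` with a single isolated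
  vertex (`bracket_markReweight`).

The brackets that remain are those of graphs with at most two vertices.
-/

/-- A weighted marked graph over `R` with vertex type `V`: a symmetric adjacency
matrix over `GF(2)` (diagonal entries record loops), a finite set of marked
vertices, weight functions `alpha` and `beta`, and a number `phi` of free loops. -/
structure WMG (R : Type*) (V : Type*) where
  adj : Matrix V V (ZMod 2)
  symm : adj.IsSymm
  marked : Finset V
  alpha : V → R
  beta : V → R
  phi : ℕ

namespace WMG

variable {R : Type*} {V : Type*}

/-- The matrix `𝒜(G)` with the diagonal entries at vertices of `T` toggled. -/
def adjT [DecidableEq V] (G : WMG R V) (T : Finset V) : Matrix V V (ZMod 2) :=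
  Matrix.of fun i j => G.adj i j + if i = j ∧ i ∈ T then 1 else 0

/-- The vertices whose rows and columns survive in `𝒜(G)_T`: all vertices except
marked ones whose toggled diagonal entry is `0`. -/
def keep [Fintype V] [DecidableEq V] (G : WMG R V) (T : Finset V) : Finset V :=
  Finset.univ.filter fun x => ¬(x ∈ G.marked ∧ G.adjT T x x = 0)

/-- The `GF(2)`-nullity of `𝒜(G)_T` (number of columns minus rank). -/
noncomputable def nullity [Fintype V] [DecidableEq V] (G : WMG R V) (T : Finset V) : ℕ :=
  Fintype.card {x // x ∈ G.keep T} -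
    ((G.adjT T).submatrix (fun i : {x // x ∈ G.keep T} => i.1)
      (fun j : {x // x ∈ G.keep T} => j.1)).rank

/-- The weighted marked-graph bracket polynomial
`[G] = d^φ · Σ_T (∏_{v ∉ T} α v) (∏_{t ∈ T} β t) d^{ν(𝒜(G)_T)}`. -/
noncomputable def bracket [CommRing R] [Fintype V] [DecidableEq V]
    (G : WMG R V) (d : Rˣ) : R :=
  (d : R) ^ G.phi *
    ∑ T : Finset V,
      (∏ x ∈ Tᶜ, G.alpha x) * (∏ t ∈ T, G.beta t) * (d : R) ^ G.nullity T

/-- Deletion of a set `S` of vertices (with all incident edges); all other data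
unchanged. -/
def delete [DecidableEq V] (G : WMG R V) (S : Finset V) : WMG R {x : V // x ∉ S} where
  adj := G.adj.submatrix Subtype.val Subtype.val
  symm := G.symm.submatrix Subtype.val
  marked := G.marked.subtype fun x => x ∉ S
  alpha := fun x => G.alpha x.1
  beta := fun x => G.beta x.1
  phi := G.phi

/-- Change the weights of the vertex `a` to `x` and `y`. -/
def reweight [DecidableEq V] (G : WMG R V) (a : V) (x y : R) : WMG R V :=
  { G with alpha := Function.update G.alpha a x, beta := Function.update G.beta a y }

/-- Mark the vertex `a` and change its weights to `x` and `y`. -/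
def markReweight [DecidableEq V] (G : WMG R V) (a : V) (x y : R) : WMG R V :=
  { G with marked := insert a G.marked,
           alpha := Function.update G.alpha a x,
           beta := Function.update G.beta a y }

/-- The composition `F ∗ H` of two weighted marked graphs along the vertices
`aF` and `aH` (thought of as a single shared vertex `a`): the vertex set is the
disjoint union of `V(F) \ {a}` and `V(H) \ {a}`; loops, marks and weights are
inherited; two vertices are adjacent iff they are adjacent in `F`, or in `H`,
or one is a neighbor of `a` in `F` and the other is a neighbor of `a` in `H`;
free loops add. -/
def comp {VF VH : Type*} [DecidableEq VF] [DecidableEq VH]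
    (F : WMG R VF) (H : WMG R VH) (aF : VF) (aH : VH) :
    WMG R ({x : VF // x ≠ aF} ⊕ {y : VH // y ≠ aH}) where
  adj := Matrix.of fun p q =>
    match p, q with
    | Sum.inl x, Sum.inl x' => F.adj x.1 x'.1
    | Sum.inl x, Sum.inr y => F.adj x.1 aF * H.adj aH y.1
    | Sum.inr y, Sum.inl x => F.adj x.1 aF * H.adj aH y.1
    | Sum.inr y, Sum.inr y' => H.adj y.1 y'.1
  symm := by
    refine Matrix.ext fun p q => ?_
    rcases p with x | y <;> rcases q with x' | y'
    · exact F.symm.apply x.1 x'.1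
    · rfl
    · rfl
    · exact H.symm.apply y.1 y'.1
  marked := (F.marked.subtype fun x => x ≠ aF).disjSum (H.marked.subtype fun y => y ≠ aH)
  alpha := Sum.elim (fun x => F.alpha x.1) (fun y => H.alpha y.1)
  beta := Sum.elim (fun x => F.beta x.1) (fun y => H.beta y.1)
  phi := F.phi + H.phi

/-- The universal property of Theorem `pjoin` for `F` and `a`, with candidate
weights `A = α'(a)`, `B = β'(a)`, `Am = α'(a_m)`: for every weighted marked
graph `H` sharing exactly the unlooped unmarked vertex `a` with `F`, in which
no neighbor of `a` is marked, `[F ∗ H] = [H'] + [H'_m]`. -/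
def UnivProp {R : Type*} [CommRing R] {VF : Type u_v} [Fintype VF] [DecidableEq VF]
    (d : Rˣ) (F : WMG R VF) (a : VF) (A B Am : R) : Prop :=
  ∀ (VH : Type u_v) [Fintype VH] [DecidableEq VH] (H : WMG R VH) (aH : VH),
    H.adj aH aH = 0 → aH ∉ H.marked →
    (∀ y : VH, H.adj aH y = 1 → y ∉ H.marked) →
    (F.comp H a aH).bracket d =
      (H.reweight aH A B).bracket d + (H.markReweight aH Am 0).bracket d

/-- The local complement `G^v`: toggle all entries of the adjacency matrix
(including diagonal ones) between members of the open neighborhood of `v`. -/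
def localComp [DecidableEq V] (G : WMG R V) (v : V) : WMG R V where
  adj := Matrix.of fun a b =>
    G.adj a b + if (a ≠ v ∧ G.adj v a = 1) ∧ (b ≠ v ∧ G.adj v b = 1) then 1 else 0
  symm := by
    refine Matrix.ext fun a b => ?_
    have h : ((b ≠ v ∧ G.adj v b = 1) ∧ (a ≠ v ∧ G.adj v a = 1)) ↔
        ((a ≠ v ∧ G.adj v a = 1) ∧ (b ≠ v ∧ G.adj v b = 1)) := and_comm
    simp only [Matrix.transpose_apply, Matrix.of_apply]
    rw [G.symm.apply a b, if_congr h rfl rfl]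
  marked := G.marked
  alpha := G.alpha
  beta := G.beta
  phi := G.phi

/-- The condition for the pivot `G^{vw}` to toggle the adjacency between `a`
and `b`: `a` and `b` are distinct and (in one order or the other) `a ∈ N(v)`,
`b ∈ N(w)`, and `a ∉ N(w)` or `b ∉ N(v)`. -/
def pivCond [DecidableEq V] (G : WMG R V) (v w a b : V) : Prop :=
  a ≠ b ∧
    (((a ≠ v ∧ G.adj v a = 1) ∧ (b ≠ w ∧ G.adj w b = 1) ∧
        (¬(a ≠ w ∧ G.adj w a = 1) ∨ ¬(b ≠ v ∧ G.adj v b = 1))) ∨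
     ((b ≠ v ∧ G.adj v b = 1) ∧ (a ≠ w ∧ G.adj w a = 1) ∧
        (¬(b ≠ w ∧ G.adj w b = 1) ∨ ¬(a ≠ v ∧ G.adj v a = 1))))

instance pivCond_decidable [DecidableEq V] (G : WMG R V) (v w a b : V) :
    Decidable (pivCond G v w a b) := by
  unfold pivCond; infer_instance

lemma pivCond_comm [DecidableEq V] (G : WMG R V) (v w a b : V) :
    pivCond G v w a b ↔ pivCond G v w b a := by
  unfold pivCond
  constructor <;> rintro ⟨h1, h2⟩ <;> exact ⟨Ne.symm h1, h2.symm⟩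

/-- The pivot `G^{vw}`. -/
def pivot [DecidableEq V] (G : WMG R V) (v w : V) : WMG R V where
  adj := Matrix.of fun a b => G.adj a b + if pivCond G v w a b then 1 else 0
  symm := by
    refine Matrix.ext fun a b => ?_
    simp only [Matrix.transpose_apply, Matrix.of_apply]
    rw [G.symm.apply a b, if_congr (pivCond_comm G v w b a) rfl rfl]
  marked := G.marked
  alpha := G.alpha
  beta := G.beta
  phi := G.phi

/-- The marked pivot `G_c^{vw}`: perform the pivot `G^{vw}`, then interchange
the neighborhoods of `v` and `w` (leaving loops unchanged) and toggle the
marks on `v` and `w`. -/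
def markedPivot [DecidableEq V] (G : WMG R V) (v w : V) : WMG R V where
  adj := Matrix.of fun a b =>
    if a = b then (G.pivot v w).adj a b
    else (G.pivot v w).adj (Equiv.swap v w a) (Equiv.swap v w b)
  symm := by
    refine Matrix.ext fun a b => ?_
    simp only [Matrix.transpose_apply, Matrix.of_apply]
    by_cases h : a = b
    · subst h; simp
    · rw [if_neg fun hh => h hh.symm, if_neg h]
      exact (G.pivot v w).symm.apply _ _
  marked := (G.marked \ {v, w}) ∪ (({v, w} : Finset V) \ G.marked)
  alpha := G.alpha
  beta := G.beta
  phi := G.phi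

/-- The bordered version of `𝒜(F − a)_T`: adjoin the row and column recording
adjacency to `a` in `F`, with corner entry `c`; `borderedNullity` is its
`GF(2)`-nullity. -/
noncomputable def borderedNullity {VF : Type*} [Fintype VF] [DecidableEq VF]
    (F : WMG R VF) (a : VF) (T : Finset {x : VF // x ∉ ({a} : Finset VF)})
    (c : ZMod 2) : ℕ :=
  Fintype.card (Option {x // x ∈ (F.delete {a}).keep T}) -
    (Matrix.of (fun p q =>
      match p, q with
      | some i, some j => (F.delete {a}).adjT T i.1 j.1
      | some i, none => F.adj i.1.1 a
      | none, some j => F.adj j.1.1 a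
      | none, none => c) :
      Matrix (Option {x // x ∈ (F.delete {a}).keep T})
        (Option {x // x ∈ (F.delete {a}).keep T}) (ZMod 2)).rank

end WMG

namespace WMG

variable {R : Type*}

/-! ### Nullities and isomorphisms -/

/-- The nullity may be computed from any matrix indexed by a type enumerating the kept vertices. -/
lemma nullity_eq {V ι : Type*} [Fintype V] [DecidableEq V] [Fintype ι]
    (G : WMG R V) (T : Finset V) (f : ι → V) (hf : Function.Injective f)
    (hk : ∀ v, v ∈ G.keep T ↔ ∃ i, f i = v) (M : Matrix ι ι (ZMod 2))
    (hM : ∀ i j, G.adjT T (f i) (f j) = M i j) :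
    G.nullity T = Fintype.card ι - M.rank := by
  let g : ι → {x // x ∈ G.keep T} := fun i => ⟨f i, (hk _).2 ⟨i, rfl⟩⟩
  have hg : Function.Bijective g := by
    refine ⟨fun i j h => hf (congrArg Subtype.val h), fun v => ?_⟩
    obtain ⟨i, hi⟩ := (hk v.1).1 v.2
    exact ⟨i, Subtype.ext hi⟩
  let e : ι ≃ {x // x ∈ G.keep T} := Equiv.ofBijective g hg
  have hM' : M = ((G.adjT T).submatrix (fun i : {x // x ∈ G.keep T} => i.1)
      (fun j : {x // x ∈ G.keep T} => j.1)).submatrix e e := by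
    ext i j
    exact (hM i j).symm
  rw [nullity, hM', Matrix.rank_submatrix, Fintype.card_congr e]

/-- The nullity is unchanged by an embedding that preserves adjacency and marks, provided the
vertices outside the image are marked and unlooped: these are not kept. -/
lemma nullity_congr {V W : Type*} [Fintype V] [DecidableEq V] [Fintype W] [DecidableEq W]
    (G : WMG R V) (G' : WMG R W) (f : V ↪ W) (T : Finset V)
    (hadj : ∀ i j, G'.adj (f i) (f j) = G.adj i j)
    (hmark : ∀ i, f i ∈ G'.marked ↔ i ∈ G.marked)
    (hout : ∀ w, w ∉ Set.range f → w ∈ G'.marked ∧ G'.adj w w = 0) :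
    G'.nullity (T.map f) = G.nullity T := by
  have hT : ∀ i j, G'.adjT (T.map f) (f i) (f j) = G.adjT T i j := by
    intro i j
    simp [adjT, hadj]
  refine nullity_eq G' _ (fun i : {x // x ∈ G.keep T} => f i.1)
    (fun i j h => Subtype.ext (f.injective h)) ?_ _ (fun i j => hT _ _)
  intro w
  by_cases hw : w ∈ Set.range f
  · obtain ⟨v, rfl⟩ := hw
    simp [keep, hT, hmark]
  · have hw' : ∀ v, f v ≠ w := fun v h => hw ⟨v, h⟩
    obtain ⟨h1, h2⟩ := hout w hw
    simp [keep, adjT, h1, h2, hw']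

variable [CommRing R]

/-- The bracket polynomial is an isomorphism invariant. -/
lemma bracket_congr {V W : Type*} [Fintype V] [DecidableEq V] [Fintype W] [DecidableEq W]
    (d : Rˣ) (G : WMG R V) (G' : WMG R W) (e : V ≃ W)
    (hadj : ∀ i j, G'.adj (e i) (e j) = G.adj i j)
    (hmark : ∀ i, e i ∈ G'.marked ↔ i ∈ G.marked)
    (halpha : ∀ i, G'.alpha (e i) = G.alpha i) (hbeta : ∀ i, G'.beta (e i) = G.beta i)
    (hphi : G'.phi = G.phi) : G'.bracket d = G.bracket d := by
  unfold bracket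
  rw [hphi]
  congr 1
  symm
  refine Fintype.sum_equiv (Equiv.finsetCongr e) _ _ fun T => ?_
  have hc : (T.map e.toEmbedding)ᶜ = Tᶜ.map e.toEmbedding := by
    ext w
    obtain ⟨v, rfl⟩ := e.surjective w
    simp
  have hn := nullity_congr G G' e.toEmbedding T hadj hmark (fun w hw => absurd (e.surjective w) hw)
  simp [Equiv.finsetCongr_apply, hc, hn, halpha, hbeta]

/-! ### Reweighting and marking as compositions -/

/-- The isolated unlooped unmarked vertex. Its weights, irrelevant in compositions along it,
are `0`. -/
def pointGraph : WMG R Unit where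
  adj := 0
  symm := Matrix.isSymm_zero
  marked := ∅
  alpha := 0
  beta := 0
  phi := 0

/-- A single edge joining `0` to `1`, unlooped and unmarked, with weights `x, y` at `1`. The
weights at `0`, the vertex used for compositions, are irrelevant and are set to `0`. -/
def edgeGraph (x y : R) : WMG R (Fin 2) where
  adj := !![0, 1; 1, 0]
  symm := by
    ext i j
    fin_cases i <;> fin_cases j <;> rfl
  marked := ∅
  alpha := ![0, x]
  beta := ![0, y]
  phi := 0

/-- Composition with an edge replaces the shared vertex `a` by the other end of the edge. -/
lemma bracket_comp_edgeGraph {V : Type*} [Fintype V] [DecidableEq V] (d : Rˣ) (H : WMG R V)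
    (a : V) (hloop : H.adj a a = 0) (hmark : a ∉ H.marked) (x y : R) :
    (H.reweight a x y).bracket d = (H.comp (edgeGraph x y) a 0).bracket d := by
  have h1 : ∀ z : {z : Fin 2 // z ≠ 0}, z.1 = 1 := by decide
  let f : {v : V // v ≠ a} ⊕ {z : Fin 2 // z ≠ 0} → V := Sum.elim Subtype.val (fun _ => a)
  have hf : Function.Bijective f := by
    constructor
    · rintro (⟨v, hv⟩ | z) (⟨w, hw⟩ | z') h
      · simpa [f] using h
      · exact absurd h hv
      · exact absurd h.symm hw
      · exact congrArg Sum.inr (Subtype.ext ((h1 z).trans (h1 z').symm))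
    · intro v
      by_cases hv : v = a
      · exact ⟨Sum.inr ⟨1, by decide⟩, hv.symm⟩
      · exact ⟨Sum.inl ⟨v, hv⟩, rfl⟩
  refine bracket_congr d _ _ (Equiv.ofBijective f hf) ?_ ?_ ?_ ?_ ?_
  · rintro (⟨v, hv⟩ | z) (⟨w, hw⟩ | z')
    · rfl
    · simp [f, reweight, comp, edgeGraph, h1 z']
    · simp [f, reweight, comp, edgeGraph, h1 z, H.symm.apply]
    · simp [f, reweight, comp, edgeGraph, h1 z, h1 z', hloop]
  · rintro (⟨v, hv⟩ | z)
    · simp [f, reweight, comp]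
    · simp [f, reweight, comp, edgeGraph, hmark]
  · rintro (⟨v, hv⟩ | z)
    · simp [f, reweight, comp, hv]
    · simp [f, reweight, comp, edgeGraph, h1 z]
  · rintro (⟨v, hv⟩ | z)
    · simp [f, reweight, comp, hv]
    · simp [f, reweight, comp, edgeGraph, h1 z]
  · simp [reweight, comp, edgeGraph]

/-- Marking an unlooped vertex `a` and giving it weights `x, 0` amounts to deleting it, at the cost
of a factor `x`; the deletion is written as a composition with an isolated vertex. -/
lemma bracket_markReweight {V : Type*} [Fintype V] [DecidableEq V] (d : Rˣ) (H : WMG R V)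
    (a : V) (hloop : H.adj a a = 0) (x : R) :
    (H.markReweight a x 0).bracket d = x * (H.comp pointGraph a ()).bracket d := by
  let f : {v : V // v ≠ a} ⊕ {z : Unit // z ≠ ()} ↪ V :=
    ⟨Sum.elim Subtype.val (fun _ => a), by
      rintro (⟨v, hv⟩ | z) (⟨w, hw⟩ | z') h
      · simpa using h
      · exact absurd rfl z'.2
      · exact absurd rfl z.2
      · exact absurd rfl z.2⟩
  have hfa : ∀ p, f p ≠ a := by
    rintro (⟨v, hv⟩ | z)
    · exact hv
    · exact absurd rfl z.2
  have hfl : ∀ v (hv : v ≠ a), f (Sum.inl ⟨v, hv⟩) = v := fun _ _ => rfl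
  have hfr : ∀ v, v ≠ a → ∃ p, f p = v := fun v hv => ⟨Sum.inl ⟨v, hv⟩, hfl v hv⟩
  have hnull : ∀ T, (H.markReweight a x 0).nullity (T.map f) =
      (H.comp pointGraph a ()).nullity T := by
    intro T
    refine nullity_congr _ _ f T ?_ ?_ ?_
    · rintro (⟨v, hv⟩ | z) (⟨w, hw⟩ | z')
      · rfl
      · exact absurd rfl z'.2
      · exact absurd rfl z.2
      · exact absurd rfl z.2
    · rintro (⟨v, hv⟩ | z)
      · simp [hfl, markReweight, comp, hv]
      · exact absurd rfl z.2
    · intro w hw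
      have hwa : w = a := by
        by_contra h
        exact hw (hfr w h)
      subst hwa
      simp [markReweight, hloop]
  have halpha : ∀ p, (H.markReweight a x 0).alpha (f p) = (H.comp pointGraph a ()).alpha p := by
    rintro (⟨v, hv⟩ | z)
    · simp [hfl, markReweight, comp, hv]
    · exact absurd rfl z.2
  have hbeta : ∀ p, (H.markReweight a x 0).beta (f p) = (H.comp pointGraph a ()).beta p := by
    rintro (⟨v, hv⟩ | z)
    · simp [hfl, markReweight, comp, hv]
    · exact absurd rfl z.2
  have hphi : (H.markReweight a x 0).phi = (H.comp pointGraph a ()).phi := rfl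
  unfold bracket
  rw [hphi, mul_left_comm]
  congr 1
  rw [Finset.mul_sum]
  symm
  refine Finset.sum_of_injOn (fun T => T.map f) (Finset.map_injective f).injOn
    (fun _ _ => Finset.mem_coe.2 (Finset.mem_univ _)) ?_ ?_
  -- a set outside the image contains `a`, whose weight `0` kills the summand
  · intro S _ hS
    have haS : a ∈ S := by
      by_contra haS
      refine hS ⟨Finset.univ.filter fun p => f p ∈ S, by simp, ?_⟩
      ext v
      simp only [Finset.mem_map, Finset.mem_filter, Finset.mem_univ, true_and]
      constructor
      · rintro ⟨p, hp, rfl⟩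
        exact hp
      · intro hv
        obtain ⟨p, rfl⟩ := hfr v (fun h => haS (h ▸ hv))
        exact ⟨p, hv, rfl⟩
    have h0 : ∏ t ∈ S, (H.markReweight a x 0).beta t = 0 :=
      Finset.prod_eq_zero haS (by simp [markReweight])
    rw [h0, mul_zero, zero_mul]
  · intro T _
    have hc : (T.map f)ᶜ = insert a (Tᶜ.map f) := by
      ext v
      by_cases hv : v = a
      · subst hv
        simp [hfa]
      · obtain ⟨p, rfl⟩ := hfr v hv
        simp [hfa]
    have ha : a ∉ Tᶜ.map f := by simp [hfa]
    have hax : (H.markReweight a x 0).alpha a = x := by simp [markReweight]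
    simp only [hc, Finset.prod_insert ha, Finset.prod_map, halpha, hbeta, hnull, hax]
    ring

/-! ### Brackets of the small graphs -/

/-- A one-vertex matrix has full rank exactly when its entry is nonzero. -/
lemma rank_unit (M : Matrix Unit Unit (ZMod 2)) : M.rank = if M () () = 0 then 0 else 1 := by
  split_ifs with h
  · have : M = 0 := by
      ext i j
      exact h
    rw [this, Matrix.rank_zero]
  · have hu : IsUnit M := by
      rw [Matrix.isUnit_iff_isUnit_det, Matrix.det_unique]
      exact isUnit_iff_ne_zero.2 h
    simpa using Matrix.rank_of_isUnit M hu

lemma sum_finset_unit (g : Finset Unit → R) : ∑ T, g T = g ∅ + g {()} := by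
  have : (Finset.univ : Finset (Finset Unit)) = {∅, {()}} := by decide
  rw [this, Finset.sum_pair (by decide)]

lemma sum_finset_fin_two (g : Finset (Fin 2) → R) :
    ∑ T, g T = g ∅ + g {0} + g {1} + g {0, 1} := by
  have : (Finset.univ : Finset (Finset (Fin 2))) = {∅, {0}, {1}, {0, 1}} := by decide
  rw [this, Finset.sum_insert (by decide), Finset.sum_insert (by decide),
    Finset.sum_pair (by decide)]
  ring

lemma bracket_pointGraph_reweight (d : Rˣ) (x y : R) :
    ((pointGraph : WMG R Unit).reweight () x y).bracket d = x * d + y := by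
  have hn : ∀ T, ((pointGraph : WMG R Unit).reweight () x y).nullity T =
      if () ∈ T then 0 else 1 := by
    intro T
    rw [nullity_eq _ T id Function.injective_id (by simp [keep, reweight, pointGraph])
      (Matrix.submatrix (adjT _ T) id id) (fun i j => rfl), rank_unit]
    by_cases h : () ∈ T <;> simp [adjT, reweight, pointGraph, h]
  unfold bracket
  have c : ({()} : Finset Unit)ᶜ = ∅ := by decide
  rw [sum_finset_unit, hn, hn, c]
  simp [reweight, pointGraph]

lemma bracket_pointGraph_markReweight (d : Rˣ) (x : R) :
    ((pointGraph : WMG R Unit).markReweight () x 0).bracket d = x := by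
  have hn : ((pointGraph : WMG R Unit).markReweight () x 0).nullity ∅ = 0 := by
    rw [nullity_eq _ ∅ (Empty.elim : Empty → Unit) (fun i => i.elim)
      (by simp [keep, adjT, markReweight, pointGraph]) 0 (fun i => i.elim)]
    simp
  unfold bracket
  rw [sum_finset_unit, hn]
  simp [markReweight, pointGraph]

lemma bracket_edgeGraph_reweight (d : Rˣ) (x y u v : R) :
    ((edgeGraph x y).reweight 0 u v).bracket d = u * x + v * x + u * y + v * y * d := by
  have hn : ∀ T, ((edgeGraph x y).reweight 0 u v).nullity T =
      2 - (!![if 0 ∈ T then 1 else 0, 1; 1, if 1 ∈ T then 1 else 0] :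
        Matrix (Fin 2) (Fin 2) (ZMod 2)).rank := by
    intro T
    rw [nullity_eq _ T id Function.injective_id (by simp [keep, reweight, edgeGraph])
      !![if 0 ∈ T then 1 else 0, 1; 1, if 1 ∈ T then 1 else 0]]
    · simp
    · intro i j
      fin_cases i <;> fin_cases j <;> simp [adjT, reweight, edgeGraph]
  have hr : ∀ M : Matrix (Fin 2) (Fin 2) (ZMod 2), M.det ≠ 0 → M.rank = 2 := by
    intro M hM
    simpa using Matrix.rank_of_isUnit M
      ((Matrix.isUnit_iff_isUnit_det M).2 (isUnit_iff_ne_zero.2 hM))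
  have hr1 : (!![1, 1; 1, 1] : Matrix (Fin 2) (Fin 2) (ZMod 2)).rank = 1 := by
    apply le_antisymm
    · have : (!![1, 1; 1, 1] : Matrix (Fin 2) (Fin 2) (ZMod 2)) =
          Matrix.vecMulVec ![1, 1] ![1, 1] := by decide
      rw [this]
      exact Matrix.rank_vecMulVec_le _ _
    -- the upper left entry is a submatrix of rank `1`
    · have h := Matrix.rank_submatrix_le (!![1, 1; 1, 1] : Matrix (Fin 2) (Fin 2) (ZMod 2))
        (fun _ : Unit => (0 : Fin 2)) (fun _ : Unit => (0 : Fin 2))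
      rw [rank_unit] at h
      simpa using h
  have h0 : ((edgeGraph x y).reweight 0 u v).nullity ∅ = 0 := by
    rw [hn, hr _ (by simp [Matrix.det_fin_two])]
  have h1 : ((edgeGraph x y).reweight 0 u v).nullity {0} = 0 := by
    rw [hn, hr _ (by simp [Matrix.det_fin_two])]
  have h2 : ((edgeGraph x y).reweight 0 u v).nullity {1} = 0 := by
    rw [hn, hr _ (by simp [Matrix.det_fin_two])]
  have h3 : ((edgeGraph x y).reweight 0 u v).nullity {0, 1} = 1 := by
    rw [hn]
    simp [hr1]
  have c1 : ({0} : Finset (Fin 2))ᶜ = {1} := by decide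
  have c2 : ({1} : Finset (Fin 2))ᶜ = {0} := by decide
  have c3 : ({0, 1} : Finset (Fin 2))ᶜ = ∅ := by decide
  unfold bracket
  rw [sum_finset_fin_two, h0, h1, h2, h3, c1, c2, c3]
  simp [reweight, edgeGraph]
  ring

lemma bracket_edgeGraph_markReweight (d : Rˣ) (x y u : R) :
    ((edgeGraph x y).markReweight 0 u 0).bracket d = u * (x * d + y) := by
  -- for `T` avoiding the marked vertex `0`, only the vertex `1` is kept
  have hn : ∀ T, 0 ∉ T → ((edgeGraph x y).markReweight 0 u 0).nullity T =
      if 1 ∈ T then 0 else 1 := by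
    intro T hT
    rw [nullity_eq _ T (fun _ : Unit => (1 : Fin 2)) (fun _ _ _ => rfl) ?_
      (Matrix.submatrix (adjT _ T) (fun _ => 1) (fun _ => 1)) (fun i j => rfl), rank_unit]
    · by_cases h : 1 ∈ T <;> simp [adjT, markReweight, edgeGraph, h]
    · intro v
      fin_cases v <;> simp [keep, adjT, markReweight, edgeGraph, hT]
  have c1 : ({0} : Finset (Fin 2))ᶜ = {1} := by decide
  have c2 : ({1} : Finset (Fin 2))ᶜ = {0} := by decide
  unfold bracket
  rw [sum_finset_fin_two, hn ∅ (by decide), hn {1} (by decide), c1, c2]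
  simp [markReweight, edgeGraph]
  ring

end WMG

theorem pjoin_double {R : Type*} [CommRing R] (d : Rˣ) {VF VH : Type}
    [Fintype VF] [DecidableEq VF] [Fintype VH] [DecidableEq VH]
    (F : WMG R VF) (H : WMG R VH) (aF : VF) (aH : VH)
    (hFloop : F.adj aF aF = 0) (hFmark : aF ∉ F.marked)
    (hHloop : H.adj aH aH = 0) (hHmark : aH ∉ H.marked)
    (hFnbr : ∀ x : VF, F.adj aF x = 1 → x ∉ F.marked)
    (hHnbr : ∀ y : VH, H.adj aH y = 1 → y ∉ H.marked)
    (AF BF AmF : R) (hF : WMG.UnivProp d F aF AF BF AmF)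
    (AH BH AmH : R) (hH : WMG.UnivProp d H aH AH BH AmH) :
    (F.comp H aF aH).bracket d =
      AF * (AH + BH) + BF * (AH + BH * (d : R)) + (AF * (d : R) + BF) * AmH +
        AmF * (AH * (d : R) + BH) + AmF * AmH := by
  rw [hF VH H aH hHloop hHmark hHnbr, WMG.bracket_comp_edgeGraph d H aH hHloop hHmark,
    WMG.bracket_markReweight d H aH hHloop,
    hH (Fin 2) (WMG.edgeGraph AF BF) 0 (by simp [WMG.edgeGraph]) (by simp [WMG.edgeGraph])
      (by simp [WMG.edgeGraph]),
    hH Unit WMG.pointGraph () (by simp [WMG.pointGraph]) (by simp [WMG.pointGraph])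
      (by simp [WMG.pointGraph]),
    WMG.bracket_edgeGraph_reweight, WMG.bracket_edgeGraph_markReweight,
    WMG.bracket_pointGraph_reweight, WMG.bracket_pointGraph_markReweight]
  ring
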